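/- arXiv:1509.04993 — 4 statements merged into one kernel-verified Lean document; each statement's English description precedes it below -/
import Mathlib

section
/- Let R be a commutative ring, f ∈ R, and l ≥ 1 an integer, and let A = R[t]/(t^l - f), so that A is a free R-module with basis 1, t, ..., t^{l-1}. Let k ≥ 1 be an integer and write k = q*l + r with integers q ≥ 0 and 0 ≤ r < l. Then an element Σ_{i=0}^{l-1} a_i t^i of A (with a_i ∈ R) lies in the ideal of A generated by t^k if and only if a_i ∈ (f^{q+1}) for every 0 ≤ i ≤ r - 1 and a_i ∈ (f^q) for every r ≤ i ≤ l - 1. -/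
open Polynomial

theorem stmt_6_root_pow {R : Type*} [CommRing R] (f : R) (l n : ℕ) :
    (AdjoinRoot.root (X ^ l - C f)) ^ n =
      AdjoinRoot.of (X ^ l - C f) (f ^ (n / l)) * (AdjoinRoot.root (X ^ l - C f)) ^ (n % l) := by
  have h : (AdjoinRoot.root (X ^ l - C f)) ^ l = AdjoinRoot.of (X ^ l - C f) f := by
    have := AdjoinRoot.eval₂_root (X ^ l - C f)
    simpa [sub_eq_zero] using this
  conv_lhs => rw [← Nat.div_add_mod n l, pow_add, pow_mul, h, ← map_pow]

theorem stmt_6_coeff {R : Type*} [CommRing R] [Nontrivial R] (f : R) (l : ℕ) (hl : 1 ≤ l)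
    (hg : (X ^ l - C f).Monic) (a : R) (n i : ℕ) :
    (AdjoinRoot.modByMonicHom hg (AdjoinRoot.of (X ^ l - C f) a *
      (AdjoinRoot.root (X ^ l - C f)) ^ n)).coeff i =
      if i = n % l then a * f ^ (n / l) else 0 := by
  rw [stmt_6_root_pow, ← mul_assoc, ← map_mul]
  have : AdjoinRoot.of (X ^ l - C f) (a * f ^ (n / l)) * (AdjoinRoot.root (X ^ l - C f)) ^ (n % l)
      = AdjoinRoot.mk (X ^ l - C f) (C (a * f ^ (n / l)) * X ^ (n % l)) := by
    simp only [map_mul, map_pow, AdjoinRoot.mk_C, AdjoinRoot.mk_X]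
  rw [this, AdjoinRoot.modByMonicHom_mk, (modByMonic_eq_self_iff hg).2, coeff_C_mul_X_pow]
  rw [degree_X_pow_sub_C hl]
  refine (degree_C_mul_X_pow_le _ _).trans_lt ?_
  exact_mod_cast Nat.mod_lt n hl

/-- Let `R` be a commutative ring, `f ∈ R`, and `l ≥ 1` an integer, and let
`A = R[t]/(t^l - f)`, so that `A` is a free `R`-module with basis
`1, t, ..., t^(l-1)`. Let `k ≥ 1` be an integer and write `k = q*l + r` with
integers `q ≥ 0` and `0 ≤ r < l`. Then an element `Σ_{i=0}^{l-1} a_i t^i` of `A`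
(with `a_i ∈ R`) lies in the ideal of `A` generated by `t^k` if and only if
`a_i ∈ (f^(q+1))` for every `0 ≤ i ≤ r - 1` and `a_i ∈ (f^q)` for every
`r ≤ i ≤ l - 1`. -/
theorem stmt_6 (R : Type*) [CommRing R] (f : R) (l : ℕ) (hl : 1 ≤ l)
    (k q r : ℕ) (hk : 1 ≤ k) (hkqr : k = q * l + r) (hr : r < l)
    (a : Fin l → R) :
    (∑ i : Fin l, (AdjoinRoot.of (X ^ l - C f)) (a i) *
        (AdjoinRoot.root (X ^ l - C f)) ^ (i : ℕ)) ∈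
      Ideal.span {(AdjoinRoot.root (X ^ l - C f)) ^ k} ↔
    ((∀ i : Fin l, (i : ℕ) < r → a i ∈ Ideal.span {f ^ (q + 1)}) ∧
      (∀ i : Fin l, r ≤ (i : ℕ) → a i ∈ Ideal.span {f ^ q})) := by
  have hdvd : ∀ m, q * l + r ≤ m → ∀ c : R, AdjoinRoot.of (X ^ l - C f) c *
      (AdjoinRoot.root (X ^ l - C f)) ^ m ∈
      Ideal.span {(AdjoinRoot.root (X ^ l - C f)) ^ k} := by
    intro m hm c
    rw [Ideal.mem_span_singleton]
    exact (pow_dvd_pow _ (hkqr ▸ hm)).mul_left _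
  have hterm : ∀ (s : ℕ) (i : Fin l) (c : R), AdjoinRoot.of (X ^ l - C f) (f ^ s * c) *
      (AdjoinRoot.root (X ^ l - C f)) ^ (i : ℕ) = AdjoinRoot.of (X ^ l - C f) c *
      (AdjoinRoot.root (X ^ l - C f)) ^ (s * l + i) := by
    intro s i c
    rw [stmt_6_root_pow f l (s * l + i)]
    have h1 : (s * l + i) / l = s := by
      rw [mul_comm, Nat.mul_add_div hl, Nat.div_eq_of_lt i.2, add_zero]
    have h2 : (s * l + i) % l = i := by
      rw [mul_comm, Nat.mul_add_mod, Nat.mod_eq_of_lt i.2]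
    rw [h1, h2, map_mul]
    ring
  constructor
  · intro h
    rcases subsingleton_or_nontrivial R with hs | hs
    · constructor <;> intro i _ <;> rw [Subsingleton.elim (a i) 0] <;> exact zero_mem _
    have hg : (X ^ l - C f).Monic := monic_X_pow_sub_C f (by omega)
    have key : ∀ (p : R[X]) (i : ℕ) (s : ℕ), (∀ n, k ≤ n → i = n % l → s ≤ n / l) →
        f ^ s ∣ (AdjoinRoot.modByMonicHom hg ((AdjoinRoot.root (X ^ l - C f)) ^ k *
          AdjoinRoot.mk (X ^ l - C f) p)).coeff i := by
      intro p i s hs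
      induction p using Polynomial.induction_on' with
      | add p p' h1 h2 =>
        rw [map_add, mul_add, map_add, coeff_add]
        exact dvd_add h1 h2
      | monomial n c =>
        have : (AdjoinRoot.root (X ^ l - C f)) ^ k * AdjoinRoot.mk (X ^ l - C f) (monomial n c)
            = AdjoinRoot.of (X ^ l - C f) c * (AdjoinRoot.root (X ^ l - C f)) ^ (k + n) := by
          rw [← C_mul_X_pow_eq_monomial, map_mul, map_pow, AdjoinRoot.mk_C, AdjoinRoot.mk_X]
          ring
        rw [this, stmt_6_coeff f l hl hg]
        split_ifs with hi
        · exact (pow_dvd_pow f (hs _ (by omega) hi)).mul_left _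
        · exact dvd_zero _
    rw [Ideal.mem_span_singleton] at h
    obtain ⟨y, hy⟩ := h
    obtain ⟨p, rfl⟩ := AdjoinRoot.mk_surjective y
    have hc : ∀ i : Fin l, (AdjoinRoot.modByMonicHom hg ((AdjoinRoot.root (X ^ l - C f)) ^ k *
          AdjoinRoot.mk (X ^ l - C f) p)).coeff i = a i := by
      intro i
      rw [← hy, map_sum, finset_sum_coeff]
      simp_rw [stmt_6_coeff f l hl hg]
      rw [Finset.sum_eq_single i]
      · simp [Nat.mod_eq_of_lt i.2, Nat.div_eq_of_lt i.2]
      · intro j _ hj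
        rw [if_neg]
        rw [Nat.mod_eq_of_lt j.2]
        exact fun e => hj (Fin.ext e.symm)
      · simp
    constructor
    · intro i hi
      rw [Ideal.mem_span_singleton, ← hc i]
      refine key p i _ fun n hn hin => ?_
      by_contra hlt
      have h1 := Nat.div_add_mod n l
      have h2 : l * (n / l) ≤ l * q := Nat.mul_le_mul_left l (by omega)
      have h3 := mul_comm l q
      omega
    · intro i hi
      rw [Ideal.mem_span_singleton, ← hc i]
      refine key p i _ fun n hn hin => ?_
      rw [Nat.le_div_iff_mul_le hl]
      omega
  · rintro ⟨h1, h2⟩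
    refine Ideal.sum_mem _ fun i _ => ?_
    by_cases hi : (i : ℕ) < r
    · obtain ⟨c, hc⟩ := Ideal.mem_span_singleton.1 (h1 i hi)
      rw [hc, hterm]
      refine hdvd _ ?_ _
      rw [add_mul]
      omega
    · obtain ⟨c, hc⟩ := Ideal.mem_span_singleton.1 (h2 i (by omega))
      rw [hc, hterm]
      exact hdvd _ (by omega) _
end

section
/- Let R be a commutative ring, f ∈ R, and l ≥ 1 an integer, and let A = R[t]/(t^l - f). Let k ≥ 1 be an integer and write k = q*l + r with integers q ≥ 0 and 0 ≤ r < l. Then the quotient A/(t^k A) is isomorphic as an R-module to (R/(f^{q+1}))^r × (R/(f^q))^{l-r}. -/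
open Polynomial

lemma aux_basis (R : Type*) [CommRing R] [Nontrivial R] (f : R) (l : ℕ) (hl : 1 ≤ l) :
    ∃ b : Module.Basis (Fin l) R (AdjoinRoot (X ^ l - C f)),
      ∀ i, b i = (AdjoinRoot.root (X ^ l - C f)) ^ (i : ℕ) := by
  have hm : (X ^ l - C f).Monic := monic_X_pow_sub_C f (by omega)
  have hd : (AdjoinRoot.powerBasis' hm).dim = l := by
    rw [AdjoinRoot.powerBasis'_dim, natDegree_X_pow_sub_C]
  refine ⟨(AdjoinRoot.powerBasis' hm).basis.reindex (finCongr hd), fun i => ?_⟩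
  simp [Module.Basis.reindex_apply, PowerBasis.basis_eq_pow]

lemma aux_root (R : Type*) [CommRing R] (f : R) (l : ℕ) :
    (AdjoinRoot.root (X ^ l - C f)) ^ l = algebraMap R _ f := by
  have h := AdjoinRoot.eval₂_root (X ^ l - C f)
  simp only [eval₂_sub, eval₂_X_pow, eval₂_C] at h
  exact sub_eq_zero.mp h

/-- The statement with `l = r + s`. -/
lemma aux_main (R : Type*) [CommRing R] [Nontrivial R] (f : R) (r s q : ℕ) (hs : 0 < s) :
    Nonempty
      ((AdjoinRoot (X ^ (r + s) - C f) ⧸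
          Ideal.span {(AdjoinRoot.root (X ^ (r + s) - C f)) ^ (q * (r + s) + r)}) ≃ₗ[R]
        (Fin r → R ⧸ Ideal.span {f ^ (q + 1)}) ×
          (Fin s → R ⧸ Ideal.span {f ^ q})) := by
  obtain ⟨b, hb⟩ := aux_basis R f (r + s) (by omega)
  have ht := aux_root R f (r + s)
  generalize hA : AdjoinRoot.root (X ^ (r + s) - C f) = t at *
  set k := q * (r + s) + r with hk
  have hkt : t ^ k = algebraMap R _ (f ^ q) * t ^ r := by
    rw [map_pow, ← ht]; ring
  let φ : AdjoinRoot (X ^ (r + s) - C f) →ₗ[R]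
      (Fin r → R ⧸ Ideal.span {f ^ (q + 1)}) × (Fin s → R ⧸ Ideal.span {f ^ q}) :=
    LinearMap.prod
      (LinearMap.pi fun i => (Submodule.mkQ (Ideal.span {f ^ (q + 1)})) ∘ₗ
        b.coord (Fin.castAdd s i))
      (LinearMap.pi fun i => (Submodule.mkQ (Ideal.span {f ^ q})) ∘ₗ
        b.coord (Fin.natAdd r i))
  have hker : ∀ x, φ x = 0 ↔ (∀ i : Fin r, f ^ (q + 1) ∣ b.repr x (Fin.castAdd s i)) ∧
      (∀ i : Fin s, f ^ q ∣ b.repr x (Fin.natAdd r i)) := by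
    intro x
    simp only [φ, Prod.ext_iff, funext_iff, LinearMap.prod_apply, Function.prod, LinearMap.pi_apply,
      LinearMap.comp_apply, Submodule.mkQ_apply, Prod.fst_zero, Prod.snd_zero, Pi.zero_apply,
      Submodule.Quotient.mk_eq_zero, Ideal.mem_span_singleton, Module.Basis.coord_apply]
  have hsurj : Function.Surjective φ := by
    rintro ⟨u, v⟩
    choose u' hu using fun i => Submodule.mkQ_surjective _ (u i)
    choose v' hv using fun i => Submodule.mkQ_surjective _ (v i)
    refine ⟨b.equivFun.symm (Fin.append u' v'), ?_⟩
    have hc : ∀ i, b.coord i (b.equivFun.symm (Fin.append u' v')) = Fin.append u' v' i := by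
      intro i
      rw [Module.Basis.coord_apply, ← Module.Basis.equivFun_apply, LinearEquiv.apply_symm_apply]
    refine Prod.ext (funext fun i => ?_) (funext fun i => ?_)
    · refine Eq.trans ?_ (hu i)
      simp only [φ, LinearMap.prod_apply, Function.prod, LinearMap.pi_apply, LinearMap.comp_apply, hc,
        Fin.append_left]
    · refine Eq.trans ?_ (hv i)
      simp only [φ, LinearMap.prod_apply, Function.prod, LinearMap.pi_apply, LinearMap.comp_apply, hc,
        Fin.append_right]
  have hbφ1 : ∀ (i : Fin (r + s)) , φ (f ^ (q + 1) • b i) = 0 := by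
    intro i
    rw [hker]
    simp only [map_smul, Finsupp.smul_apply, smul_eq_mul]
    exact ⟨fun j => Dvd.intro _ rfl, fun j => (pow_dvd_pow f (by omega)).mul_right _⟩
  have hbφ2 : ∀ (i : Fin (r + s)) , r ≤ (i : ℕ) → φ (f ^ q • b i) = 0 := by
    intro i hi
    rw [hker]
    simp only [map_smul, Finsupp.smul_apply, smul_eq_mul]
    refine ⟨fun j => ?_, fun j => Dvd.intro _ rfl⟩
    have hne : i ≠ Fin.castAdd s j := by
      intro h
      have := congrArg Fin.val h
      simp only [Fin.val_castAdd] at this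
      omega
    simp [Module.Basis.repr_self, Finsupp.single_apply, hne]
  have hK : LinearMap.ker φ = (Ideal.span {t ^ k}).restrictScalars R := by
    apply le_antisymm
    · intro x hx
      rw [LinearMap.mem_ker, hker] at hx
      rw [Submodule.restrictScalars_mem, ← b.sum_repr x]
      refine Ideal.sum_mem _ fun i _ => ?_
      rw [Ideal.mem_span_singleton]
      induction i using Fin.addCases with
      | left i =>
        obtain ⟨c, hc⟩ := hx.1 i
        refine ⟨algebraMap R _ c * t ^ (i + s : ℕ), ?_⟩
        have e : t ^ r * t ^ (i + s : ℕ) = algebraMap R _ f * t ^ (i : ℕ) := by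
          rw [← ht]; ring
        rw [hc, hb, hkt, Algebra.smul_def, Fin.val_castAdd, map_mul, pow_succ, map_mul]
        linear_combination (-(algebraMap R _ (f ^ q) * algebraMap R _ c)) * e
      | right i =>
        obtain ⟨c, hc⟩ := hx.2 i
        refine ⟨algebraMap R _ c * t ^ (i : ℕ), ?_⟩
        rw [hc, hb, hkt, Algebra.smul_def, Fin.val_natAdd, map_mul]
        ring
    · intro x hx
      rw [Submodule.restrictScalars_mem, Ideal.mem_span_singleton] at hx
      obtain ⟨y, rfl⟩ := hx
      rw [LinearMap.mem_ker, ← b.sum_repr y, Finset.mul_sum, map_sum]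
      refine Finset.sum_eq_zero fun j _ => ?_
      rw [mul_smul_comm, map_smul]
      have : φ (t ^ k * b j) = 0 := by
        by_cases h : r + (j : ℕ) < r + s
        · rw [← hbφ2 ⟨r + j, h⟩ (by simp), hb, hb, hkt, Algebra.smul_def]
          congr 1
          simp only
          ring
        · rw [← hbφ1 ⟨r + j - (r + s), by omega⟩, hb, hb, hkt, Algebra.smul_def]
          congr 1
          have e : t ^ r * t ^ (j : ℕ) = algebraMap R _ f * t ^ (r + j - (r + s) : ℕ) := by
            rw [← ht, ← pow_add, ← pow_add]
            congr 1
            omega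
          simp only [pow_succ, map_mul]
          linear_combination (algebraMap R _ (f ^ q)) * e
      rw [this, smul_zero]
  exact ⟨(Submodule.Quotient.restrictScalarsEquiv R (Ideal.span {t ^ k})).symm ≪≫ₗ
    Submodule.quotEquivOfEq _ _ hK.symm ≪≫ₗ φ.quotKerEquivOfSurjective hsurj⟩




/-- Let `R` be a commutative ring, `f ∈ R`, and `l ≥ 1` an integer, and let
`A = R[t]/(t^l - f)`. Let `k ≥ 1` be an integer and write `k = q*l + r` with
integers `q ≥ 0` and `0 ≤ r < l`. Then the quotient `A/(t^k A)` is isomorphic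
as an `R`-module to `(R/(f^(q+1)))^r × (R/(f^q))^(l-r)`. -/
theorem stmt_7 (R : Type*) [CommRing R] (f : R) (l : ℕ) (hl : 1 ≤ l)
    (k q r : ℕ) (hk : 1 ≤ k) (hkqr : k = q * l + r) (hr : r < l) :
    Nonempty
      ((AdjoinRoot (X ^ l - C f) ⧸
          Ideal.span {(AdjoinRoot.root (X ^ l - C f)) ^ k}) ≃ₗ[R]
        (Fin r → R ⧸ Ideal.span {f ^ (q + 1)}) ×
          (Fin (l - r) → R ⧸ Ideal.span {f ^ q})) := by
  obtain ⟨s, rfl⟩ := Nat.exists_eq_add_of_le hr.le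
  subst hkqr
  rw [Nat.add_sub_cancel_left]
  rcases subsingleton_or_nontrivial R with h | h
  · have h1 : Subsingleton (AdjoinRoot (X ^ (r + s) - C f) ⧸
          Ideal.span {(AdjoinRoot.root (X ^ (r + s) - C f)) ^ (q * (r + s) + r)}) :=
      Module.subsingleton R _
    have h2 : Subsingleton ((Fin r → R ⧸ Ideal.span {f ^ (q + 1)}) ×
          (Fin s → R ⧸ Ideal.span {f ^ q})) := Module.subsingleton R _
    exact ⟨0⟩
  · exact aux_main R f r s q (by omega)
end

section
/- Let p ≥ 3, k ≥ 1, n ≥ k + 1, χ ≥ 1, s ≥ 1 be integers and let t be an integer with t ≤ (p^k - 1)*s. Then, as rational numbers, p^n*χ + (1/12)*p^n*(p^n - 1)*((2*p^n - 1)*s - 3*t) ≥ 2. -/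
/-- Let `p ≥ 3`, `k ≥ 1`, `n ≥ k + 1`, `χ ≥ 1`, `s ≥ 1` be integers and let `t`
be an integer with `t ≤ (p^k - 1)*s`. Then, as rational numbers,
`p^n*χ + (1/12)*p^n*(p^n - 1)*((2*p^n - 1)*s - 3*t) ≥ 2`. -/
theorem stmt_9 (p χ s t : ℤ) (k n : ℕ) (hp : 3 ≤ p) (hk : 1 ≤ k)
    (hn : k + 1 ≤ n) (hχ : 1 ≤ χ) (hs : 1 ≤ s) (ht : t ≤ (p ^ k - 1) * s) :
    (2 : ℚ) ≤ (p : ℚ) ^ n * χ +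
      (1 / 12) * (p : ℚ) ^ n * ((p : ℚ) ^ n - 1) *
        ((2 * (p : ℚ) ^ n - 1) * s - 3 * t) := by
  have hp' : (3 : ℚ) ≤ p := by exact_mod_cast hp
  have hχ' : (1 : ℚ) ≤ χ := by exact_mod_cast hχ
  have hs' : (1 : ℚ) ≤ s := by exact_mod_cast hs
  have ht' : (t : ℚ) ≤ ((p : ℚ) ^ k - 1) * s := by exact_mod_cast ht
  have hP : (1 : ℚ) ≤ (p : ℚ) ^ k := one_le_pow₀ (by linarith)
  have hQ : 3 * (p : ℚ) ^ k ≤ (p : ℚ) ^ n := by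
    calc 3 * (p : ℚ) ^ k ≤ p * (p : ℚ) ^ k :=
          mul_le_mul_of_nonneg_right hp' (by linarith)
      _ = (p : ℚ) ^ (k + 1) := by ring
      _ ≤ (p : ℚ) ^ n := pow_le_pow_right₀ (by linarith) hn
  generalize (p : ℚ) ^ k = P at *
  generalize (p : ℚ) ^ n = Q at *
  have h1 : 0 ≤ (2 * Q - 1) * (s : ℚ) - 3 * t := by
    have : 0 ≤ (2 * Q - 1 - 3 * (P - 1)) * (s : ℚ) :=
      mul_nonneg (by linarith) (by linarith)
    linarith
  have h2 : 0 ≤ (1 / 12) * Q * (Q - 1) * ((2 * Q - 1) * (s : ℚ) - 3 * t) :=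
    mul_nonneg (mul_nonneg (by linarith) (by linarith)) h1
  have h3 : Q * 1 ≤ Q * (χ : ℚ) := mul_le_mul_of_nonneg_left hχ' (by linarith)
  linarith
end

section
/- Let R be a commutative ring, f ∈ R, and l ≥ 1 an integer, and let A = R[t]/(t^l - f). Let k ≥ 1 be an integer, write k = q*l + r with q ≥ 0 and 0 ≤ r < l, and suppose r ≥ 1. Then the kernel of the natural ring homomorphism R → A/(t^k A) is the ideal (f^{q+1}); if instead r = 0, the kernel is (f^q). -/
open Polynomial


/-- The functional `t^i ↦ f^(i/l)` if `l ∣ i`, and `0` otherwise. -/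
noncomputable def phiAux {R : Type*} [CommRing R] (f : R) (l : ℕ) : R[X] →ₗ[R] R :=
  Polynomial.lsum (fun i => LinearMap.mulRight R (if l ∣ i then f ^ (i / l) else 0))

lemma phiAux_monomial {R : Type*} [CommRing R] (f : R) (l i : ℕ) (a : R) :
    phiAux f l (monomial i a) = a * (if l ∣ i then f ^ (i / l) else 0) := by
  simp [phiAux, Polynomial.lsum_apply, Polynomial.sum_monomial_index]

lemma phiAux_kill {R : Type*} [CommRing R] (f : R) (l : ℕ) (hl : 1 ≤ l) (p : R[X]) :
    phiAux f l ((X ^ l - C f) * p) = 0 := by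
  induction p using Polynomial.induction_on' with
  | add p q hp hq => rw [mul_add, map_add, hp, hq, add_zero]
  | monomial n a =>
    rw [sub_mul, X_pow_mul_monomial, C_mul_monomial, map_sub, phiAux_monomial, phiAux_monomial]
    by_cases h : l ∣ n
    · have h2 : l ∣ n + l := Dvd.dvd.add h dvd_rfl
      rw [if_pos h, if_pos h2, Nat.add_div_right _ hl, pow_succ]
      ring
    · have h2 : ¬ l ∣ n + l := by simpa using h
      simp [h]

lemma phiAux_dvd {R : Type*} [CommRing R] (f : R) (l k m : ℕ)
    (h : ∀ i, k ≤ i → l ∣ i → m ≤ i / l) (p : R[X]) :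
    f ^ m ∣ phiAux f l (X ^ k * p) := by
  induction p using Polynomial.induction_on' with
  | add p q hp hq => rw [mul_add, map_add]; exact dvd_add hp hq
  | monomial n a =>
    rw [X_pow_mul_monomial, phiAux_monomial]
    split_ifs with hd
    · exact Dvd.dvd.mul_left (pow_dvd_pow _ (h _ (by omega) hd)) _
    · simp

lemma ker_aux {R : Type*} [CommRing R] (f : R) (l k m : ℕ) (hl : 1 ≤ l)
    (h : ∀ i, k ≤ i → l ∣ i → m ≤ i / l) (hkm : k ≤ l * m) :
    RingHom.ker (algebraMap R (AdjoinRoot (X ^ l - C f) ⧸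
          Ideal.span {(AdjoinRoot.root (X ^ l - C f)) ^ k})) =
        Ideal.span {f ^ m} := by
  ext x
  have e0 : algebraMap R (AdjoinRoot (X ^ l - C f) ⧸
          Ideal.span {(AdjoinRoot.root (X ^ l - C f)) ^ k}) x =
      Ideal.Quotient.mk _ (algebraMap R (AdjoinRoot (X ^ l - C f)) x) := rfl
  rw [RingHom.mem_ker, Ideal.mem_span_singleton, e0, Ideal.Quotient.eq_zero_iff_mem, Ideal.mem_span_singleton,
    AdjoinRoot.algebraMap_eq]
  constructor
  · rintro ⟨a, ha⟩
    obtain ⟨p, rfl⟩ := AdjoinRoot.mk_surjective a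
    rw [← AdjoinRoot.mk_C, ← AdjoinRoot.mk_X, ← map_pow, ← map_mul, AdjoinRoot.mk_eq_mk] at ha
    obtain ⟨b, hb⟩ := ha
    have h1 := congrArg (phiAux f l) hb
    rw [phiAux_kill f l hl, map_sub, sub_eq_zero, ← monomial_zero_left, phiAux_monomial] at h1
    simp only [dvd_zero, if_true, Nat.zero_div, pow_zero, mul_one] at h1
    rw [h1]
    exact phiAux_dvd f l k m h p
  · rintro ⟨y, rfl⟩
    have e : AdjoinRoot.of (X ^ l - C f) f = AdjoinRoot.root (X ^ l - C f) ^ l := by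
      rw [← AdjoinRoot.mk_C, ← AdjoinRoot.mk_X, ← map_pow, eq_comm, AdjoinRoot.mk_eq_mk]
    rw [map_mul, map_pow, e, ← pow_mul]
    exact Dvd.dvd.mul_right (pow_dvd_pow _ hkm) _

/-- Let `R` be a commutative ring, `f ∈ R`, and `l ≥ 1` an integer, and let
`A = R[t]/(t^l - f)`. Let `k ≥ 1` be an integer, write `k = q*l + r` with
`q ≥ 0` and `0 ≤ r < l`. Then the kernel of the natural ring homomorphism
`R → A/(t^k A)` is the ideal `(f^(q+1))` if `r ≥ 1`; if instead `r = 0`,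
the kernel is `(f^q)`. -/
theorem stmt_14 (R : Type*) [CommRing R] (f : R) (l : ℕ) (hl : 1 ≤ l)
    (k q r : ℕ) (hk : 1 ≤ k) (hkqr : k = q * l + r) (hr : r < l) :
    (1 ≤ r →
      RingHom.ker (algebraMap R (AdjoinRoot (X ^ l - C f) ⧸
          Ideal.span {(AdjoinRoot.root (X ^ l - C f)) ^ k})) =
        Ideal.span {f ^ (q + 1)}) ∧
    (r = 0 →
      RingHom.ker (algebraMap R (AdjoinRoot (X ^ l - C f) ⧸
          Ideal.span {(AdjoinRoot.root (X ^ l - C f)) ^ k})) =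
        Ideal.span {f ^ q}) := by
  refine ⟨fun h1 => ker_aux f l k (q + 1) hl ?_ ?_, fun h0 => ker_aux f l k q hl ?_ ?_⟩
  · rintro i hi ⟨c, rfl⟩
    rw [Nat.mul_div_cancel_left _ hl]
    by_contra hc
    have : l * c ≤ l * q := Nat.mul_le_mul_left _ (by omega)
    have := mul_comm l q
    omega
  · rw [mul_add, mul_comm l q]; omega
  · intro i hi _
    rw [Nat.le_div_iff_mul_le hl]; omega
  · rw [mul_comm l q]; omega
end
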